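/- Let λ ≥ 2 and let θ ∈ S¹ be λ-renormalizable, with sign sequence ⟨s_n⟩. Then the set of critical times {n ≥ 1 : s_{n−1} = s_n} is infinite. -/

import Mathlib

noncomputable section

abbrev F2 := FreeGroup Bool

def gh : F2 := FreeGroup.of true
def gv : F2 := FreeGroup.of false

def hmat (l : ℝ) : Matrix.SpecialLinearGroup (Fin 2) ℝ :=
  ⟨!![1, l; 0, 1], by norm_num [Matrix.det_fin_two_of]⟩

def vmat (l : ℝ) : Matrix.SpecialLinearGroup (Fin 2) ℝ :=
  ⟨!![1, 0; l, 1], by norm_num [Matrix.det_fin_two_of]⟩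

def rho (l : ℝ) : F2 →* Matrix.SpecialLinearGroup (Fin 2) ℝ :=
  FreeGroup.lift fun b => if b then hmat l else vmat l

def act (l : ℝ) (g : F2) (x : Fin 2 → ℝ) : Fin 2 → ℝ :=
  (rho l g).val.mulVec x

def nrm (x : Fin 2 → ℝ) : ℝ := Real.sqrt (x 0 ^ 2 + x 1 ^ 2)

def Circ : Set (Fin 2 → ℝ) := {x | nrm x = 1}

def gens : Set F2 := {gh, gv, gh⁻¹, gv⁻¹}

def ShrinkSet (l : ℝ) (g : F2) : Set (Fin 2 → ℝ) :=
  {x | x ∈ Circ ∧ nrm (act l g x) < 1}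

def ExpSet (l : ℝ) (g : F2) : Set (Fin 2 → ℝ) :=
  {x | x ∈ Circ ∧ 1 < nrm (act l g x)}

def IsGeodesicRay (g : ℕ → F2) : Prop :=
  g 0 = 1 ∧ (∀ n, g (n + 1) * (g n)⁻¹ ∈ gens) ∧ ∀ n, g (n + 2) * (g n)⁻¹ ≠ 1

def IsGeodesicSegment (g : ℕ → F2) (N : ℕ) : Prop :=
  g 0 = 1 ∧ (∀ n, n + 1 ≤ N → g (n + 1) * (g n)⁻¹ ∈ gens) ∧
    ∀ n, n + 2 ≤ N → g (n + 2) * (g n)⁻¹ ≠ 1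

def IsShrinkingSeq (l : ℝ) (g : ℕ → F2) (θ : Fin 2 → ℝ) : Prop :=
  ∀ ε : ℝ, 0 < ε → ∃ i : ℕ, nrm (act l (g i) θ) < ε

def Shrinkable (l : ℝ) (θ : Fin 2 → ℝ) : Prop :=
  ∀ ε : ℝ, 0 < ε → ∃ g : F2, nrm (act l g θ) < ε

def Renormalizable (l : ℝ) (θ : Fin 2 → ℝ) : Prop :=
  Shrinkable l θ ∧ ∀ k : F2, ∀ c : ℝ, act l (k * (gh * gv⁻¹) * k⁻¹) θ ≠ c • θ

abbrev SP := Bool × Bool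

def Quad (s : SP) : Set (Fin 2 → ℝ) :=
  {x | (if s.1 then 0 < x 0 else x 0 < 0) ∧ (if s.2 then 0 < x 1 else x 1 < 0)}

def letterSigma : Bool × Bool → SP → SP
  | (true, true), s => (s.2, s.2)
  | (false, true), s => (s.1, s.1)
  | (true, false), s => (!s.2, s.2)
  | (false, false), s => (s.1, !s.1)

def SigmaAct (g : F2) : SP → SP :=
  (FreeGroup.toWord g).foldr (fun w acc => letterSigma w ∘ acc) id

def gammaAut : F2 →* F2 := FreeGroup.lift fun b => if b then gv⁻¹ else gh⁻¹

def rPerm (s : SP) : SP := (!s.2, s.1)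

def rPermInv (s : SP) : SP := (s.2, !s.1)

def shiftRay (g : ℕ → F2) : ℕ → F2 := fun n => g (n + 1) * (g 1)⁻¹

def TailEquiv (g g' : ℕ → F2) : Prop :=
  ∃ m n : ℕ, shiftRay^[m] g = shiftRay^[n] g'

def seqPow (a : F2) : ℕ → F2 := fun n => a ^ n

def seqPer (a b : F2) : ℕ → F2 := fun n =>
  if n % 2 = 0 then (b * a) ^ (n / 2) else a * (b * a) ^ (n / 2)

def Cond1 (g : ℕ → F2) : Prop :=
  ¬ TailEquiv g (seqPow gh) ∧ ¬ TailEquiv g (seqPow gh⁻¹) ∧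
    ¬ TailEquiv g (seqPow gv) ∧ ¬ TailEquiv g (seqPow gv⁻¹)

def Cond2 (g : ℕ → F2) : Prop :=
  ¬ TailEquiv g (seqPer gh gv⁻¹) ∧ ¬ TailEquiv g (seqPer gh⁻¹ gv)

def adjSum {V : Type} (G : SimpleGraph V) (f : V → ℝ) (v : V) : ℝ :=
  ∑ᶠ w ∈ G.neighborSet v, f w

def BoundedValance {V : Type} (G : SimpleGraph V) : Prop :=
  ∃ D : ℕ, ∀ v, (G.neighborSet v).Finite ∧ (G.neighborSet v).ncard ≤ D

def BipartWith {V : Type} (G : SimpleGraph V) (A : Set V) : Prop :=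
  ∀ v w, G.Adj v w → (v ∈ A ↔ w ∉ A)

def Hop {V : Type} (G : SimpleGraph V) (A : Set V) (k : ℤ) (f : V → ℝ) : V → ℝ :=
  fun v => f v + (k : ℝ) * Set.indicator A (adjSum G f) v

def Vop {V : Type} (G : SimpleGraph V) (A : Set V) (k : ℤ) (f : V → ℝ) : V → ℝ :=
  fun v => f v + (k : ℝ) * Set.indicator Aᶜ (adjSum G f) v

def QuadV {V : Type} (A : Set V) (s : SP) : Set (V → ℝ) :=
  {f | (∀ v ∈ A, f v = 0 ∨ (if s.1 then 0 < f v else f v < 0)) ∧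
       ∀ v, v ∉ A → f v = 0 ∨ (if s.2 then 0 < f v else f v < 0)}

def valance {V : Type} (G : SimpleGraph V) (v : V) : ℕ := (G.neighborSet v).ncard

def evec {V : Type} (v : V) : V → ℝ := Set.indicator {v} 1

def InSpoke {V : Type} (G : SimpleGraph V) (x : V) : Prop :=
  ∃ k : ℕ, 2 ≤ k ∧ ∃ c : ℕ → V,
    (∀ i j, 1 ≤ i → i ≤ k → 1 ≤ j → j ≤ k → c i = c j → i = j) ∧
    valance G (c 1) = 1 ∧
    (∀ i, 2 ≤ i → i ≤ k - 1 →
      valance G (c i) = 2 ∧ G.Adj (c i) (c (i - 1)) ∧ G.Adj (c i) (c (i + 1))) ∧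
    ∃ i, 1 ≤ i ∧ i ≤ k ∧ x = c i

/-!
Call `x² + y² - |λxy|` the sector form of `(x, y)`. On the pair of opposite quadrants `λxy > 0` it
is the quadratic form preserved by `hv⁻¹`, and on the other pair it is the one preserved by `h⁻¹v`.
A generator that moves a point from one quadrant to another exchanges the two pairs and takes one
of these forms to the other, so the sector form is constant along a stretch of the orbit without
critical times. If the critical times were finite in number, the sector form would be eventually
constant along the shrinking sequence, hence eventually zero. But in the quadrants `λxy > 0` its
zeros are the eigenvectors of `hv⁻¹`, and one of any two consecutive points lies there.
-/

section Shear

variable {R : Type*} [CommRing R] [LinearOrder R] [IsStrictOrderedRing R] {a b c : R}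

lemma mul_mul_neg_of_mul_shear_neg (h : a * (a + c * b) < 0) : c * (a * b) < 0 := by
  linear_combination h + sq_nonneg a

lemma mul_shear_mul_pos_of_mul_shear_neg (h : a * (a + c * b) < 0) :
    0 < c * ((a + c * b) * b) := by
  have hprod : 0 < a ^ 2 * (c * ((a + c * b) * b)) := by
    linear_combination mul_pos_of_neg_of_neg h (mul_mul_neg_of_mul_shear_neg h)
  exact pos_of_mul_pos_right hprod (sq_nonneg a)

lemma shear_sq_add_sq_sub_abs_eq (h : a * (a + c * b) < 0) :
    (a + c * b) ^ 2 + b ^ 2 - |c * ((a + c * b) * b)| = a ^ 2 + b ^ 2 - |c * (a * b)| := by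
  rw [abs_of_pos (mul_shear_mul_pos_of_mul_shear_neg h),
    abs_of_neg (mul_mul_neg_of_mul_shear_neg h)]
  ring

end Shear

lemma infinite_setOf_lt_of_forall_exists_lt {ι α : Type*} [LinearOrder α] {f : ι → α} {a ε : α}
    (hf : ∀ i, a < f i) (h : ∀ δ, a < δ → ∃ i, f i < δ) (hε : a < ε) :
    {i | f i < ε}.Infinite := by
  intro hfin
  obtain ⟨m, hmε, hmin⟩ := Set.exists_min_image _ f hfin (h ε hε)
  obtain ⟨i, him⟩ := h (f m) (hf m)
  exact (hmin i (him.trans hmε)).not_gt him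

section Action

variable {l : ℝ} {u : F2}

lemma act_one (x : Fin 2 → ℝ) : act l 1 x = x := by
  simp [act]

lemma act_mul (a b : F2) (x : Fin 2 → ℝ) : act l (a * b) x = act l a (act l b x) := by
  simp only [act, map_mul, Matrix.SpecialLinearGroup.coe_mul, Matrix.mulVec_mulVec]

lemma act_smul (a : F2) (c : ℝ) (x : Fin 2 → ℝ) : act l a (c • x) = c • act l a x :=
  Matrix.mulVec_smul _ _ _

lemma act_gh (x : Fin 2 → ℝ) : act l gh x = ![x 0 + l * x 1, x 1] := by
  ext i
  fin_cases i <;> simp [act, rho, gh, hmat, Matrix.mulVec, dotProduct, Fin.sum_univ_two]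

lemma act_gv (x : Fin 2 → ℝ) : act l gv x = ![x 0, x 1 + l * x 0] := by
  ext i
  fin_cases i <;> simp [act, rho, gv, vmat, Matrix.mulVec, dotProduct, Fin.sum_univ_two, add_comm]

lemma act_inv_eq_of_act_eq {a : F2} {x y : Fin 2 → ℝ} (h : act l a y = x) : act l a⁻¹ x = y := by
  rw [← h, ← act_mul, inv_mul_cancel, act_one]

lemma act_gh_inv (x : Fin 2 → ℝ) : act l gh⁻¹ x = ![x 0 - l * x 1, x 1] := by
  refine act_inv_eq_of_act_eq ?_
  ext i
  fin_cases i <;> simp [act_gh]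

lemma act_gv_inv (x : Fin 2 → ℝ) : act l gv⁻¹ x = ![x 0, x 1 - l * x 0] := by
  refine act_inv_eq_of_act_eq ?_
  ext i
  fin_cases i <;> simp [act_gv]

lemma exists_shear_of_mem_gens (hu : u ∈ gens) :
    ∃ i j : Fin 2, i ≠ j ∧ ∃ c : ℝ, (c = l ∨ c = -l) ∧
      ∀ y, act l u y i = y i + c * y j ∧ act l u y j = y j := by
  rcases hu with rfl | rfl | rfl | rfl
  · exact ⟨0, 1, by decide, l, .inl rfl, fun y ↦ by simp [act_gh]⟩
  · exact ⟨1, 0, by decide, l, .inl rfl, fun y ↦ by simp [act_gv]⟩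
  · exact ⟨0, 1, by decide, -l, .inr rfl, fun y ↦ by simp [act_gh_inv, sub_eq_add_neg]⟩
  · exact ⟨1, 0, by decide, -l, .inr rfl, fun y ↦ by simp [act_gv_inv, sub_eq_add_neg]⟩

lemma act_conj_eq_smul {a k : F2} {c : ℝ} {x : Fin 2 → ℝ}
    (h : act l a (act l k x) = c • act l k x) : act l (k⁻¹ * a * k) x = c • x := by
  rw [act_mul, act_mul, h, act_smul, act_inv_eq_of_act_eq rfl]

end Action

section Quadrants

variable {s s' : SP} {y y' : Fin 2 → ℝ}

lemma mem_Quad_iff :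
    y ∈ Quad s ↔ (y 0 ≠ 0 ∧ s.1 = decide (0 < y 0)) ∧ (y 1 ≠ 0 ∧ s.2 = decide (0 < y 1)) := by
  rcases s with ⟨_ | _, _ | _⟩ <;> simp only [Quad, Set.mem_ofPred_eq] <;> grind

lemma mul_neg_of_mem_Quad_of_ne (h : y ∈ Quad s) (h' : y' ∈ Quad s') (hne : s ≠ s')
    {i j : Fin 2} (hij : i ≠ j) (hj : y' j = y j) : y i * y' i < 0 := by
  rw [mem_Quad_iff] at h h'
  rw [Ne, Prod.ext_iff, h.1.2, h.2.2, h'.1.2, h'.2.2] at hne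
  rw [mul_neg_iff]
  fin_cases i <;> fin_cases j <;> grind

lemma nrm_pos_of_mem_Quad (h : y ∈ Quad s) : 0 < nrm y := by
  have h0 : y 0 ≠ 0 := (mem_Quad_iff.1 h).1.1
  exact Real.sqrt_pos.2 (by positivity)

end Quadrants

/-- The form `x² + y² - |λxy|` on the plane, which is quadratic on each quadrant. It is the
invariant that a step changing the quadrant preserves. -/
def sectorForm (l : ℝ) (y : Fin 2 → ℝ) : ℝ := y 0 ^ 2 + y 1 ^ 2 - |l * (y 0 * y 1)|

section SectorForm

variable {l : ℝ} {y : Fin 2 → ℝ}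

lemma apply_mul_apply_of_ne {i j : Fin 2} (hij : i ≠ j) : y i * y j = y 0 * y 1 := by
  fin_cases i <;> fin_cases j <;> simp_all [mul_comm]

lemma sectorForm_eq_of_ne {i j : Fin 2} (hij : i ≠ j) {c : ℝ} (hc : c = l ∨ c = -l) :
    sectorForm l y = y i ^ 2 + y j ^ 2 - |c * (y i * y j)| := by
  have hsq : y 0 ^ 2 + y 1 ^ 2 = y i ^ 2 + y j ^ 2 := by
    fin_cases i <;> fin_cases j <;> simp_all [add_comm]
  rw [sectorForm, hsq, apply_mul_apply_of_ne hij, abs_mul, abs_mul c, abs_eq_abs.2 hc]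

lemma abs_sectorForm_le : |sectorForm l y| ≤ (1 + |l|) * nrm y ^ 2 := by
  have hcross : |y 0 * y 1| ≤ y 0 ^ 2 + y 1 ^ 2 := by
    rw [abs_le]
    constructor <;> nlinarith [sq_nonneg (y 0 + y 1), sq_nonneg (y 0 - y 1)]
  calc |sectorForm l y| ≤ |y 0 ^ 2 + y 1 ^ 2| + |l * (y 0 * y 1)| := by
        simpa [sectorForm] using abs_sub (y 0 ^ 2 + y 1 ^ 2) |l * (y 0 * y 1)|
    _ = (y 0 ^ 2 + y 1 ^ 2) + |l| * |y 0 * y 1| := by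
        rw [abs_of_nonneg (by positivity), abs_mul]
    _ ≤ (y 0 ^ 2 + y 1 ^ 2) + |l| * (y 0 ^ 2 + y 1 ^ 2) := by gcongr
    _ = (1 + |l|) * nrm y ^ 2 := by
        rw [nrm, Real.sq_sqrt (by positivity)]
        ring

lemma exists_act_gh_mul_gv_inv_eq_smul (hzero : sectorForm l y = 0) (hpos : 0 < l * (y 0 * y 1)) :
    ∃ c : ℝ, act l (gh * gv⁻¹) y = c • y := by
  have hy : y 1 ≠ 0 := by
    rintro h
    simp [h] at hpos
  rw [sectorForm, abs_of_pos hpos] at hzero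
  refine ⟨(y 1 - l * y 0) / y 1, ?_⟩
  rw [act_mul, act_gv_inv, act_gh]
  ext i
  fin_cases i
  · simp only [Fin.zero_eta, Matrix.cons_val_zero, Matrix.cons_val_one, Pi.smul_apply, smul_eq_mul]
    field_simp
    linear_combination l * hzero
  · simp [hy]

variable {u : F2} {s s' : SP}

lemma sectorForm_act_eq (hu : u ∈ gens) (h : y ∈ Quad s) (h' : act l u y ∈ Quad s')
    (hne : s ≠ s') : sectorForm l (act l u y) = sectorForm l y := by
  obtain ⟨i, j, hij, c, hc, hact⟩ := exists_shear_of_mem_gens (l := l) hu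
  obtain ⟨hi, hj⟩ := hact y
  have hflip := mul_neg_of_mem_Quad_of_ne h h' hne hij hj
  rw [hi] at hflip
  rw [sectorForm_eq_of_ne hij hc, sectorForm_eq_of_ne hij hc, hi, hj,
    shear_sq_add_sq_sub_abs_eq hflip]

lemma mul_pos_or_mul_act_pos (hu : u ∈ gens) (h : y ∈ Quad s) (h' : act l u y ∈ Quad s')
    (hne : s ≠ s') :
    0 < l * (y 0 * y 1) ∨ 0 < l * (act l u y 0 * act l u y 1) := by
  obtain ⟨i, j, hij, c, hc, hact⟩ := exists_shear_of_mem_gens (l := l) hu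
  obtain ⟨hi, hj⟩ := hact y
  have hflip := mul_neg_of_mem_Quad_of_ne h h' hne hij hj
  rw [hi] at hflip
  rw [← apply_mul_apply_of_ne hij, ← apply_mul_apply_of_ne hij, hi, hj]
  rcases hc with rfl | rfl
  · exact .inr (mul_shear_mul_pos_of_mul_shear_neg hflip)
  · exact .inl (by simpa using mul_mul_neg_of_mul_shear_neg hflip)

end SectorForm

section Orbit

variable {l : ℝ} {y : ℕ → Fin 2 → ℝ} {s : ℕ → SP} {N : ℕ}

lemma sectorForm_eq_of_noncritical (hy : ∀ n, ∃ u ∈ gens, y (n + 1) = act l u (y n))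
    (hs : ∀ n, y n ∈ Quad (s n)) (hne : ∀ n ≥ N, s n ≠ s (n + 1)) {n : ℕ} (hn : N ≤ n) :
    sectorForm l (y n) = sectorForm l (y N) := by
  induction n, hn using Nat.le_induction with
  | base => rfl
  | succ n hn ih =>
    obtain ⟨u, hu, hstep⟩ := hy n
    rw [hstep, sectorForm_act_eq hu (hs n) (hstep ▸ hs (n + 1)) (hne n hn), ih]

lemma eq_zero_of_sectorForm_eq {C : ℝ} (hpos : ∀ n, 0 < nrm (y n))
    (hsmall : ∀ ε, 0 < ε → ∃ i, nrm (y i) < ε) (hC : ∀ n ≥ N, sectorForm l (y n) = C) :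
    C = 0 := by
  by_contra hne
  have hε : 0 < √(|C| / (1 + |l|)) := by positivity
  obtain ⟨n, hn, hNn⟩ :=
    (infinite_setOf_lt_of_forall_exists_lt hpos hsmall hε).exists_gt N
  have hlt : nrm (y n) ^ 2 * (1 + |l|) < |C| :=
    (lt_div_iff₀ (by positivity)).1 ((Real.lt_sqrt (hpos n).le).1 hn)
  have hle : |C| ≤ (1 + |l|) * nrm (y n) ^ 2 := hC n hNn.le ▸ abs_sectorForm_le
  linarith

lemma exists_eigenvector_of_noncritical (hy : ∀ n, ∃ u ∈ gens, y (n + 1) = act l u (y n))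
    (hs : ∀ n, y n ∈ Quad (s n)) (hne : ∀ n ≥ N, s n ≠ s (n + 1))
    (hsmall : ∀ ε, 0 < ε → ∃ i, nrm (y i) < ε) :
    ∃ n, ∃ c : ℝ, act l (gh * gv⁻¹) (y n) = c • y n := by
  have hconst (n) (hn : N ≤ n) := sectorForm_eq_of_noncritical hy hs hne hn
  have hzero : sectorForm l (y N) = 0 :=
    eq_zero_of_sectorForm_eq (fun n ↦ nrm_pos_of_mem_Quad (hs n)) hsmall hconst
  obtain ⟨u, hu, hstep⟩ := hy N
  rcases mul_pos_or_mul_act_pos hu (hs N) (hstep ▸ hs (N + 1)) (hne N le_rfl) with hpos | hpos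
  · exact ⟨N, exists_act_gh_mul_gv_inv_eq_smul hzero hpos⟩
  · rw [← hstep] at hpos
    exact ⟨N + 1, exists_act_gh_mul_gv_inv_eq_smul ((hconst _ N.le_succ).trans hzero) hpos⟩

end Orbit

theorem stmt11_general (l : ℝ) (x : Fin 2 → ℝ)
    (heig : ∀ k : F2, ∀ c : ℝ, act l (k * (gh * gv⁻¹) * k⁻¹) x ≠ c • x)
    (g : ℕ → F2) (hg : ∀ n, g (n + 1) * (g n)⁻¹ ∈ gens) (hgs : IsShrinkingSeq l g x)
    (s : ℕ → SP) (hs : ∀ i, act l (g i) x ∈ Quad (s i)) :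
    {n : ℕ | 1 ≤ n ∧ s (n - 1) = s n}.Infinite := by
  intro hfin
  obtain ⟨N, hN⟩ := hfin.bddAbove
  have hne : ∀ n ≥ N, s n ≠ s (n + 1) := fun n hn heq ↦
    (hN (show n + 1 ∈ _ from ⟨n.succ_pos, heq⟩)).not_gt (Nat.lt_succ_of_le hn)
  have hstep (n) : ∃ u ∈ gens, act l (g (n + 1)) x = act l u (act l (g n) x) :=
    ⟨_, hg n, by rw [← act_mul, inv_mul_cancel_right]⟩
  obtain ⟨n, c, hc⟩ := exists_eigenvector_of_noncritical hstep hs hne hgs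
  exact heig (g n)⁻¹ c (by rw [inv_inv, act_conj_eq_smul hc])

theorem stmt11 (l : ℝ) (hl : 2 ≤ l) (x : Fin 2 → ℝ) (hx : x ∈ Circ)
    (hren : Renormalizable l x)
    (g : ℕ → F2) (hg : IsGeodesicRay g) (hgs : IsShrinkingSeq l g x)
    (s : ℕ → SP) (hs : ∀ i, act l (g i) x ∈ Quad (s i)) :
    {n : ℕ | 1 ≤ n ∧ s (n - 1) = s n}.Infinite :=
  stmt11_general l x hren.2 g hg.2.1 hgs s hs
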